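/- Suppose condition (P2') holds: there exists a compact non-trivial subgroup H of Σ such that, for every k ∈ -ℕ, the law of N_{k,l} converges weakly as l → -∞ to a probability measure ν_k on Σ that is right H-invariant (invariant under σ ↦ σh for every h ∈ H), and the image of N_{k,l} in the coset space Σ/H (the quotient of Σ by the right action of H, with the quotient topology) converges a.s. as l → -∞. Suppose moreover that Σ is left-cancellative (στ₁ = στ₂ implies τ₁ = τ₂) and that every element of Σ has cancellative action on S (σx = σy implies x = y). Let {X,N} be an extremal solution such that, for each k ∈ -ℕ, the law of X_k equals ν_k * δ_x for some x ∈ S. If the orbit Hx := {hx : h ∈ H} is not a singleton, then the solution {X,N} is not strong. -/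

import Mathlib

open MeasureTheory ProbabilityTheory Filter Topology
open scoped NNReal ENNReal

universe u v w w₂

noncomputable section

/-- The sub-σ-field generated by the process `Y` from index `k` on; since index `j : ℕ`
stands for time `-j`, this is the σ-field of the past `σ(Y_j : j ≤ -k)`. -/
def past {Ω α : Type*} [MeasurableSpace α] (Y : ℕ → Ω → α) (k : ℕ) : MeasurableSpace Ω :=
  ⨆ j ≥ k, MeasurableSpace.comap (Y j) inferInstance

/-- A solution of Tsirelson's equation with noise law `μ`.  The index `k : ℕ` stands for the
time `-k ∈ -ℕ`, so that time `k - 1` corresponds to index `k + 1`. -/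
structure IsSolution {Ω S G : Type*} [MeasurableSpace Ω] [MeasurableSpace S] [MeasurableSpace G]
    [SMul G S] (P : Measure Ω) (μ : ℕ → Measure G)
    (X : ℕ → Ω → S) (N : ℕ → Ω → G) : Prop where
  measurable_X : ∀ k, Measurable (X k)
  measurable_N : ∀ k, Measurable (N k)
  eqn : ∀ k, X k =ᵐ[P] fun ω => N k ω • X (k + 1) ω
  indep : ∀ k, Indep (MeasurableSpace.comap (N k) inferInstance)
      (past X (k + 1) ⊔ past N (k + 1)) P
  law_N : ∀ k, P.map (N k) = μ k

/-- The joint law of `(X, N)` on the path space `S^{-ℕ} × Σ^{-ℕ}`. -/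
def jointLaw {Ω S G : Type*} [MeasurableSpace Ω] [MeasurableSpace S] [MeasurableSpace G]
    (P : Measure Ω) (X : ℕ → Ω → S) (N : ℕ → Ω → G) : Measure ((ℕ → S) × (ℕ → G)) :=
  P.map fun ω => (fun k => X k ω, fun k => N k ω)

/-- A solution is strong if each `X k` is a.s. equal to a `past N k`-measurable function,
i.e. `X k` is measurable for the `P`-completion of `σ(N_j : j ≤ -k)`. -/
def IsStrong {Ω S G : Type*} [MeasurableSpace Ω] [MeasurableSpace S] [MeasurableSpace G]
    (P : Measure Ω) (X : ℕ → Ω → S) (N : ℕ → Ω → G) : Prop :=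
  ∀ k, ∃ Y : Ω → S, Measurable[past N k] Y ∧ X k =ᵐ[P] Y

/-- Triviality of the tail σ-field `⨅ k, m k`. -/
def TailTrivial {Ω : Type*} [MeasurableSpace Ω] (P : Measure Ω)
    (m : ℕ → MeasurableSpace Ω) : Prop :=
  ∀ A : Set Ω, MeasurableSet[⨅ k, m k] A → P A = 0 ∨ P A = 1

/-- Convolution `μ * ν` of a measure on the acting semigroup with a measure on the space:
the pushforward of `μ ⊗ ν` under the action map. -/
def conv {G S : Type*} [MeasurableSpace G] [MeasurableSpace S] [SMul G S]
    (μ : Measure G) (ν : Measure S) : Measure S :=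
  (μ.prod ν).map fun p => p.1 • p.2

/-- Convolution of two measures on the semigroup. -/
def convG {G : Type*} [MeasurableSpace G] [Mul G] (μ ν : Measure G) : Measure G :=
  (μ.prod ν).map fun p => p.1 * p.2

/-- `prodN N n j = N_n · N_{n+1} · ⋯ · N_{n+j}`; in the time-indexing of the paper (index `m`
is time `-m`) this is `N_{k,l}` with `k = -n` and `l = -(n+j)-1 → -∞` as `j → ∞`. -/
def prodN {Ω G : Type*} [Mul G] (N : ℕ → Ω → G) (n : ℕ) : ℕ → Ω → G
  | 0 => N n
  | j + 1 => fun ω => prodN N n j ω * N (n + j + 1) ω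

/-- `convIter μ n j = μ_n * μ_{n+1} * ⋯ * μ_{n+j}`, the law analogue of `prodN`. -/
def convIter {G : Type*} [MeasurableSpace G] [Mul G] (μ : ℕ → Measure G) (n : ℕ) :
    ℕ → Measure G
  | 0 => μ n
  | j + 1 => convG (convIter μ n j) (μ (n + j + 1))

/-- `sigPow G n` is `Σ^{n+1}`, the set of products of `n+1` elements of `Σ = G`. -/
def sigPow (G : Type*) [Mul G] : ℕ → Set G
  | 0 => Set.univ
  | n + 1 => Set.image2 (· * ·) (sigPow G n) Set.univ

/-- Two sub-σ-fields are equal up to `P`-null sets. -/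
def EqModNull {Ω : Type*} [MeasurableSpace Ω] (P : Measure Ω)
    (m₁ m₂ : MeasurableSpace Ω) : Prop :=
  (∀ A, MeasurableSet[m₁] A → ∃ B, MeasurableSet[m₂] B ∧ P (symmDiff A B) = 0) ∧
  (∀ B, MeasurableSet[m₂] B → ∃ A, MeasurableSet[m₁] A ∧ P (symmDiff A B) = 0)

end

section Context

variable {S : Type u} {G : Type v}
  [TopologicalSpace S] [CompactSpace S] [TopologicalSpace.MetrizableSpace S]
  [SecondCountableTopology S] [MeasurableSpace S] [BorelSpace S]
  [TopologicalSpace G] [CompactSpace G] [TopologicalSpace.MetrizableSpace G]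
  [SecondCountableTopology G] [MeasurableSpace G] [BorelSpace G]
  [Semigroup G] [ContinuousMul G]
  [SMul G S] [ContinuousSMul G S] [IsScalarTower G G S]

end Context

section Tsirelson

variable {S : Type u} {G : Type v}
  [TopologicalSpace S] [CompactSpace S] [TopologicalSpace.MetrizableSpace S]
  [SecondCountableTopology S] [MeasurableSpace S] [BorelSpace S]
  [TopologicalSpace G] [CompactSpace G] [TopologicalSpace.MetrizableSpace G]
  [SecondCountableTopology G] [MeasurableSpace G] [BorelSpace G]
  [Semigroup G] [ContinuousMul G]
  [SMul G S] [ContinuousSMul G S] [IsScalarTower G G S]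

/-- The right coset `σH`. -/
def rightCosetOf {G : Type*} [Mul G] (H : Set G) (σ : G) : Set G := (fun h => σ * h) '' H

/-- The coset space `Σ/H`, as the quotient of `Σ` identifying elements with the same right
coset, equipped (automatically) with the quotient topology. -/
abbrev CosetSpace {G : Type*} [Mul G] (H : Set G) := Quotient (Setoid.ker (rightCosetOf H))

/-- Condition (P2'): `H` is a compact non-trivial subgroup of `Σ`; for every `k`, the law of
`N_{k,l}` converges weakly as `l → -∞` to a right `H`-invariant probability law `ν_k`, and the
image of `N_{k,l}` in `Σ/H` converges a.s. as `l → -∞`. -/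
structure CondP2' {Ω G : Type*} [MeasurableSpace Ω] [TopologicalSpace G] [Semigroup G]
    [MeasurableSpace G] (P : Measure Ω) (N : ℕ → Ω → G) (H : Set G) (ν : ℕ → Measure G) :
    Prop where
  compact : IsCompact H
  mul_mem : ∀ a ∈ H, ∀ b ∈ H, a * b ∈ H
  nontrivial : ∃ a ∈ H, ∃ b ∈ H, a ≠ b
  exists_identity_inverses : ∃ e ∈ H, (∀ h ∈ H, e * h = h ∧ h * e = h) ∧
    ∀ h ∈ H, ∃ h' ∈ H, h * h' = e ∧ h' * h = e
  prob_ν : ∀ k, IsProbabilityMeasure (ν k)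
  right_invariant : ∀ k, ∀ h ∈ H, (ν k).map (fun σ => σ * h) = ν k
  weak_conv : ∀ (n : ℕ) (f : C(G, ℝ)),
    Tendsto (fun j => ∫ σ, f σ ∂(P.map (prodN N n j))) atTop (𝓝 (∫ σ, f σ ∂(ν n)))
  coset_conv : ∀ n : ℕ, ∀ᵐ ω ∂P, ∃ q : CosetSpace H,
    Tendsto (fun j => Quotient.mk (Setoid.ker (rightCosetOf H)) (prodN N n j ω)) atTop (𝓝 q)

/-- The σ-field generated by `N 0, …, N j`. -/
def recentN {Ω α : Type*} [MeasurableSpace α] (N : ℕ → Ω → α) : ℕ → MeasurableSpace Ω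
  | 0 => MeasurableSpace.comap (N 0) inferInstance
  | j + 1 => recentN N j ⊔ MeasurableSpace.comap (N (j + 1)) inferInstance

theorem indep_sup_left_aux {Ω : Type*} {m : MeasurableSpace Ω} (P : Measure Ω)
    [IsProbabilityMeasure P] {a b c d : MeasurableSpace Ω} (ha : a ≤ m) (hb : b ≤ m) (hc : c ≤ m)
    (hbd : b ≤ d) (hcd : c ≤ d) (h1 : Indep a d P) (h2 : Indep b c P) : Indep (a ⊔ b) c P := by
  have hgen : a ⊔ b = MeasurableSpace.generateFrom
      (Set.image2 (· ∩ ·) {s | MeasurableSet[a] s} {s | MeasurableSet[b] s}) := by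
    apply le_antisymm
    · refine sup_le ?_ ?_
      · intro s hs
        exact MeasurableSpace.measurableSet_generateFrom
          ⟨s, hs, Set.univ, @MeasurableSet.univ _ b, by simp⟩
      · intro s hs
        exact MeasurableSpace.measurableSet_generateFrom
          ⟨Set.univ, @MeasurableSet.univ _ a, s, hs, by simp⟩
    · apply MeasurableSpace.generateFrom_le
      rintro _ ⟨s, hs, t, ht, rfl⟩
      exact @MeasurableSet.inter _ (a ⊔ b) _ _ ((le_sup_left : a ≤ a ⊔ b) _ hs)
        ((le_sup_right : b ≤ a ⊔ b) _ ht)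
  refine IndepSets.indep (sup_le ha hb) hc ?_ (@MeasurableSpace.isPiSystem_measurableSet _ c) hgen
    (@MeasurableSpace.generateFrom_measurableSet _ c).symm ?_
  · rintro _ ⟨s, hs, t, ht, rfl⟩ _ ⟨s', hs', t', ht', rfl⟩ _
    exact ⟨s ∩ s', @MeasurableSet.inter _ a _ _ hs hs', t ∩ t',
      @MeasurableSet.inter _ b _ _ ht ht', by
        ext ω; simp only [Set.mem_inter_iff]; tauto⟩
  · rw [IndepSets_iff]
    rintro _ u ⟨s, hs, t, ht, rfl⟩ hu
    rw [Indep_iff] at h1 h2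
    have e1 := h1 s (t ∩ u) hs (@MeasurableSet.inter _ d _ _ (hbd _ ht) (hcd _ hu))
    have e2 := h1 s t hs (hbd _ ht)
    have e3 := h2 t u ht hu
    show P (s ∩ t ∩ u) = P (s ∩ t) * P u
    rw [Set.inter_assoc, e1, e2, e3, mul_assoc]

theorem comap_le_past {Ω α : Type*} [MeasurableSpace α] (Y : ℕ → Ω → α) {k j : ℕ} (h : k ≤ j) :
    MeasurableSpace.comap (Y j) inferInstance ≤ past Y k :=
  le_iSup₂_of_le (f := fun j (_ : j ≥ k) => MeasurableSpace.comap (Y j) inferInstance) j h le_rfl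

theorem past_le {Ω α : Type*} [m : MeasurableSpace Ω] [MeasurableSpace α] (Y : ℕ → Ω → α)
    (hY : ∀ k, Measurable (Y k)) (k : ℕ) : past Y k ≤ m :=
  iSup₂_le fun j _ => (hY j).comap_le

theorem past_anti {Ω α : Type*} [MeasurableSpace α] (Y : ℕ → Ω → α) (k : ℕ) :
    past Y (k + 1) ≤ past Y k :=
  iSup₂_le fun _ hj => comap_le_past Y (Nat.le_of_succ_le hj)

theorem recentN_le {Ω α : Type*} [m : MeasurableSpace Ω] [MeasurableSpace α] (N : ℕ → Ω → α)
    (hN : ∀ k, Measurable (N k)) (j : ℕ) : recentN N j ≤ m := by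
  induction j with
  | zero => exact (hN 0).comap_le
  | succ j ih => exact sup_le ih (hN _).comap_le

theorem recentN_mono {Ω α : Type*} [MeasurableSpace α] (N : ℕ → Ω → α) :
    Monotone (recentN N) :=
  monotone_nat_of_le_succ fun _ => le_sup_left

theorem comap_le_recentN {Ω α : Type*} [MeasurableSpace α] (N : ℕ → Ω → α) (j : ℕ) :
    MeasurableSpace.comap (N j) inferInstance ≤ recentN N j := by
  cases j with
  | zero => exact le_rfl
  | succ j => exact le_sup_right

theorem past_le_iSup_recentN {Ω α : Type*} [MeasurableSpace α] (N : ℕ → Ω → α) :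
    past N 0 ≤ ⨆ j, recentN N j :=
  iSup₂_le fun j _ => (comap_le_recentN N j).trans (le_iSup (recentN N) j)

theorem recentN_indep {Ω S G : Type*} [MeasurableSpace Ω] [MeasurableSpace S] [MeasurableSpace G]
    [SMul G S] (P : Measure Ω) [IsProbabilityMeasure P] (μ : ℕ → Measure G)
    (X : ℕ → Ω → S) (N : ℕ → Ω → G) (hsol : IsSolution P μ X N) (j : ℕ) :
    Indep (recentN N j) (past X (j + 1) ⊔ past N (j + 1)) P := by
  induction j with
  | zero => exact hsol.indep 0
  | succ j ih =>
    refine indep_sup_left_aux P (recentN_le N hsol.measurable_N j)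
      (hsol.measurable_N _).comap_le
      (sup_le (past_le X hsol.measurable_X _) (past_le N hsol.measurable_N _))
      ((comap_le_past N le_rfl).trans le_sup_right)
      (sup_le_sup (past_anti X _) (past_anti N _)) ih (hsol.indep _)

theorem prodN_measurable {Ω G : Type*} [MeasurableSpace G] [Mul G] [MeasurableMul₂ G]
    (N : ℕ → Ω → G) (j : ℕ) : Measurable[recentN N j] (prodN N 0 j) := by
  induction j with
  | zero => exact comap_measurable (N 0)
  | succ j ih =>
    have h1 : Measurable[recentN N (j + 1)] (prodN N 0 j) := ih.mono le_sup_left le_rfl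
    have h2 : Measurable[recentN N (j + 1)] (N (0 + j + 1)) := by
      rw [Nat.zero_add]
      exact (comap_measurable (N (j + 1))).mono le_sup_right le_rfl
    let _ : MeasurableSpace Ω := recentN N (j + 1)
    exact h1.mul h2

theorem X_eq_prodN {Ω S G : Type*} [MeasurableSpace Ω] [MeasurableSpace S] [MeasurableSpace G]
    [Semigroup G] [SMul G S] [IsScalarTower G G S] (P : Measure Ω) (μ : ℕ → Measure G)
    (X : ℕ → Ω → S) (N : ℕ → Ω → G) (hsol : IsSolution P μ X N) (j : ℕ) :
    ∀ᵐ ω ∂P, X 0 ω = prodN N 0 j ω • X (j + 1) ω := by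
  induction j with
  | zero => exact hsol.eqn 0
  | succ j ih =>
    filter_upwards [ih, hsol.eqn (j + 1)] with ω h1 h2
    rw [h1, h2]
    simp only [prodN, Nat.zero_add]
    rw [← smul_assoc, smul_eq_mul]

/-- Coupling estimate. -/
theorem coupling_bound {Ω Ω' S G : Type*} [MeasurableSpace Ω] [MeasurableSpace Ω']
    [MeasurableSpace S] [MeasurableSpace G] (P : Measure Ω) [IsProbabilityMeasure P]
    (W : Ω → Ω') (Y : Ω → S) (hW : Measurable W) (hY : Measurable Y) (hind : IndepFun W Y P)
    (F : Ω' → S → ℝ) (hF : Measurable (Function.uncurry F)) (z : Ω' → ℝ) (hz : Measurable z)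
    (ν : Measure G) [IsProbabilityMeasure ν] (a b : G → S) (ha : Measurable a) (hb : Measurable b)
    (hla : ν.map a = P.map Y) (hlb : ν.map b = P.map Y) :
    ∫⁻ w, ∫⁻ σ, ‖F w (a σ) - F w (b σ)‖ₑ ∂ν ∂(P.map W) ≤
      2 * ∫⁻ ω, ‖F (W ω) (Y ω) - z (W ω)‖ₑ ∂P := by
  have hFz : Measurable fun p : Ω' × S => ‖F p.1 p.2 - z p.1‖ₑ :=
    (hF.sub (hz.comp measurable_fst)).enorm
  have key : ∀ c : G → S, Measurable c → ν.map c = P.map Y →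
      ∫⁻ ω, ‖F (W ω) (Y ω) - z (W ω)‖ₑ ∂P =
        ∫⁻ w, ∫⁻ σ, ‖F w (c σ) - z w‖ₑ ∂ν ∂(P.map W) := by
    intro c hc hlc
    have : IsProbabilityMeasure (P.map Y) := Measure.isProbabilityMeasure_map hY.aemeasurable
    have h1 := hind.map_prod_eq_prod_map_map hW.aemeasurable hY.aemeasurable
    calc ∫⁻ ω, ‖F (W ω) (Y ω) - z (W ω)‖ₑ ∂P
        = ∫⁻ p, ‖F p.1 p.2 - z p.1‖ₑ ∂(P.map fun ω => (W ω, Y ω)) := by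
          rw [lintegral_map hFz (hW.prodMk hY)]
      _ = ∫⁻ w, ∫⁻ y, ‖F w y - z w‖ₑ ∂(P.map Y) ∂(P.map W) := by
          rw [h1, lintegral_prod _ hFz.aemeasurable]
      _ = _ := by
          rw [← hlc]
          refine lintegral_congr fun w => ?_
          exact lintegral_map (hFz.comp measurable_prodMk_left) hc
  have hma : Measurable fun p : Ω' × G => ‖F p.1 (a p.2) - z p.1‖ₑ :=
    hFz.comp (measurable_fst.prodMk (ha.comp measurable_snd))
  rw [two_mul]
  nth_rewrite 1 [key a ha hla]
  rw [key b hb hlb, ← lintegral_add_left hma.lintegral_prod_right']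
  refine lintegral_mono fun w => ?_
  refine le_trans ?_ (lintegral_add_left (hma.comp measurable_prodMk_left) _).le
  refine lintegral_mono fun σ => ?_
  have : F w (a σ) - F w (b σ) = (F w (a σ) - z w) - (F w (b σ) - z w) := by ring
  show ‖F w (a σ) - F w (b σ)‖ₑ ≤ _
  rw [this]
  exact enorm_sub_le

/-- One-function estimate. -/
theorem one_function_tendsto {Ω S G : Type*} [mΩ : MeasurableSpace Ω]
    [MeasurableSpace S] [MeasurableSpace G] [Semigroup G] [MeasurableMul₂ G]
    [SMul G S] [MeasurableSMul₂ G S] [IsScalarTower G G S]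
    (P : Measure Ω) [IsProbabilityMeasure P] (μ : ℕ → Measure G)
    (X : ℕ → Ω → S) (N : ℕ → Ω → G) (hsol : IsSolution P μ X N)
    (ν : ℕ → Measure G) (hν : ∀ k, IsProbabilityMeasure (ν k)) (a b : G → S)
    (ha : Measurable a) (hb : Measurable b)
    (hla : ∀ k, (ν k).map a = P.map (X k)) (hlb : ∀ k, (ν k).map b = P.map (X k))
    (Y : Ω → S) (hY : Measurable[past N 0] Y) (hXY : X 0 =ᵐ[P] Y)
    (f : S → ℝ) (hf : Measurable f) (C : ℝ) (hC : ∀ y, ‖f y‖ ≤ C) :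
    Tendsto (fun j => ∫⁻ ω, ∫⁻ σ, ‖f (prodN N 0 j ω • a σ) - f (prodN N 0 j ω • b σ)‖ₑ
      ∂(ν (j + 1)) ∂P) atTop (𝓝 0) := by
  let ℱ : Filtration ℕ mΩ :=
    ⟨recentN N, recentN_mono N, recentN_le N hsol.measurable_N⟩
  have hYm : Measurable[⨆ n, ℱ n] Y := hY.mono (past_le_iSup_recentN N) le_rfl
  have hg : StronglyMeasurable[⨆ n, ℱ n] (f ∘ Y) := (hf.comp hYm).stronglyMeasurable
  have hYm' : Measurable Y := hYm.mono (iSup_le ℱ.le) le_rfl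
  have hint : Integrable (f ∘ Y) P :=
    Integrable.of_bound (hf.comp hYm').aestronglyMeasurable C (ae_of_all _ fun ω => hC _)
  have hlim := hint.tendsto_eLpNorm_condExp hg
  have hlim2 := ENNReal.Tendsto.const_mul (a := 2) hlim (Or.inr (by simp))
  rw [mul_zero] at hlim2
  refine tendsto_of_tendsto_of_tendsto_of_le_of_le tendsto_const_nhds hlim2
    (fun _ => zero_le) fun j => ?_
  have hle : recentN N j ≤ mΩ := recentN_le N hsol.measurable_N j
  have hz : Measurable[recentN N j] (P[f ∘ Y | ℱ j]) :=
    (stronglyMeasurable_condExp (m := recentN N j)).measurable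
  have hind : @IndepFun Ω Ω S mΩ (recentN N j) _ id (X (j + 1)) P := by
    refine (@IndepFun_iff_Indep Ω Ω S mΩ (recentN N j) _ id (X (j + 1)) P).2 ?_
    rw [MeasurableSpace.comap_id]
    exact indep_of_indep_of_le_right (recentN_indep P μ X N hsol j)
      ((comap_le_past X le_rfl).trans le_sup_left)
  have hW : @Measurable Ω Ω mΩ (recentN N j) id := measurable_id'' hle
  have hF : @Measurable (Ω × S) ℝ (@Prod.instMeasurableSpace _ _ (recentN N j) _) _
      (Function.uncurry fun (ω : Ω) (y : S) => f (prodN N 0 j ω • y)) := by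
    let _ : MeasurableSpace Ω := recentN N j
    have := prodN_measurable N j
    exact hf.comp ((this.comp measurable_fst).smul measurable_snd)
  have hb := @coupling_bound Ω Ω S G mΩ (recentN N j) _ _ P _ id (X (j + 1)) hW
    (hsol.measurable_X _) hind (fun ω y => f (prodN N 0 j ω • y)) hF _ hz (ν (j + 1)) _ a b
    ha hb (hla _) (hlb _)
  have hmeas : @Measurable Ω ℝ≥0∞ (recentN N j) _
      fun ω => ∫⁻ σ, ‖f (prodN N 0 j ω • a σ) - f (prodN N 0 j ω • b σ)‖ₑ ∂(ν (j + 1)) := by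
    let _ : MeasurableSpace Ω := recentN N j
    have h0 := prodN_measurable N j
    refine Measurable.lintegral_prod_right'
      (f := fun p : Ω × G => ‖f (prodN N 0 j p.1 • a p.2) - f (prodN N 0 j p.1 • b p.2)‖ₑ) ?_
    exact ((hf.comp ((h0.comp measurable_fst).smul (ha.comp measurable_snd))).sub
      (hf.comp ((h0.comp measurable_fst).smul (by fun_prop)))).enorm
  rw [@lintegral_map Ω Ω mΩ (recentN N j) P _ _ hmeas hW] at hb
  refine hb.trans (le_of_eq ?_)
  show 2 * _ = 2 * _
  congr 1
  rw [eLpNorm_one_eq_lintegral_enorm]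
  refine lintegral_congr_ae ?_
  filter_upwards [X_eq_prodN P μ X N hsol j, hXY] with ω h1 h2
  simp only [id, Pi.sub_apply, Function.comp]
  rw [← h1, h2, ← enorm_neg]
  congr 1
  ring

/-- Under (P2'), if `Σ` is left-cancellative and acts cancellatively on `S`,
an extremal solution whose marginals are `ν_k * δ_x` with `Hx` not a singleton is not strong. -/
theorem tsirelson_P2'_nonsingleton_orbit_not_strong
    {Ω : Type w} [MeasurableSpace Ω] (P : Measure Ω) [IsProbabilityMeasure P]
    (μ : ℕ → Measure G) (hμ : ∀ k, IsProbabilityMeasure (μ k))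
    (X : ℕ → Ω → S) (N : ℕ → Ω → G) (hsol : IsSolution P μ X N)
    (H : Set G) (ν : ℕ → Measure G) (hP2 : CondP2' P N H ν)
    (hleftcancel : ∀ σ τ₁ τ₂ : G, σ * τ₁ = σ * τ₂ → τ₁ = τ₂)
    (hcancelact : ∀ (σ : G) (x y : S), σ • x = σ • y → x = y)
    (hext : TailTrivial P fun k => past X k ⊔ past N k)
    (x : S) (hlaw : ∀ k, P.map (X k) = conv (ν k) (Measure.dirac x))
    (hHx : ¬ Set.Subsingleton ((fun h : G => h • x) '' H)) :
    ¬ IsStrong P X N := by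
  intro hstrong
  obtain ⟨Y, hY, hXY⟩ := hstrong 0
  rw [Set.not_subsingleton_iff] at hHx
  obtain ⟨_, ⟨h₁, hh₁, rfl⟩, _, ⟨h₂, hh₂, rfl⟩, hne⟩ := hHx
  let _ : MetricSpace S := TopologicalSpace.metrizableSpaceMetric S
  have hν := hP2.prob_ν
  have hsm : ∀ y : S, Measurable fun σ : G => σ • y := fun y =>
    (continuous_id.smul continuous_const).measurable
  have hlaw' : ∀ h ∈ H, ∀ k, (ν k).map (fun σ => σ • (h • x)) = P.map (X k) := by
    intro h hh k
    rw [hlaw k, conv, Measure.prod_dirac, Measure.map_map (by fun_prop) (by fun_prop)]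
    conv_rhs => rw [← hP2.right_invariant k h hh]
    rw [Measure.map_map (by exact (hsm x)) (measurable_mul_const h)]
    congr 1
    ext σ
    simp only [Function.comp]
    rw [← smul_eq_mul, smul_assoc]
  -- uniform separation
  obtain ⟨ε, hε, hsep⟩ : ∃ ε > 0, ∀ σ : G, ε ≤ dist (σ • (h₁ • x)) (σ • (h₂ • x)) := by
    have hcont : Continuous fun σ : G => dist (σ • (h₁ • x)) (σ • (h₂ • x)) := by fun_prop
    obtain ⟨σ₀, -, hσ₀⟩ := isCompact_univ.exists_isMinOn ⟨h₁, Set.mem_univ h₁⟩ hcont.continuousOn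
    exact ⟨_, dist_pos.2 fun h => hne (hcancelact σ₀ _ _ h), fun σ => hσ₀ (Set.mem_univ σ)⟩
  obtain ⟨t, -, htfin, ht⟩ := Metric.finite_approx_of_totallyBounded
    (isCompact_univ (X := S)).totallyBounded (ε / 4) (by positivity)
  have hlim : ∀ y ∈ htfin.toFinset, Tendsto (fun j => ∫⁻ ω, ∫⁻ σ,
      ‖dist (prodN N 0 j ω • (σ • (h₁ • x))) y - dist (prodN N 0 j ω • (σ • (h₂ • x))) y‖ₑ
      ∂(ν (j + 1)) ∂P) atTop (𝓝 0) := by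
    intro y _
    obtain ⟨C, hC⟩ := isCompact_univ.exists_bound_of_continuousOn
      (f := fun z : S => dist z y) (by fun_prop)
    exact one_function_tendsto P μ X N hsol ν hν (fun σ => σ • (h₁ • x)) (fun σ => σ • (h₂ • x))
      (hsm _) (hsm _) (hlaw' h₁ hh₁) (hlaw' h₂ hh₂) Y hY hXY (fun z => dist z y) (by fun_prop) C
      (fun z => hC z (Set.mem_univ z))
  have hsum := tendsto_finsetSum htfin.toFinset hlim
  rw [Finset.sum_const_zero] at hsum
  have hlow : ∀ j, ENNReal.ofReal (ε / 2) ≤ ∑ y ∈ htfin.toFinset, ∫⁻ ω, ∫⁻ σ,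
      ‖dist (prodN N 0 j ω • (σ • (h₁ • x))) y - dist (prodN N 0 j ω • (σ • (h₂ • x))) y‖ₑ
      ∂(ν (j + 1)) ∂P := by
    intro j
    have hpm : Measurable (prodN N 0 j) :=
      (prodN_measurable N j).mono (recentN_le N hsol.measurable_N j) le_rfl
    have hm : ∀ y : S, Measurable fun p : Ω × G =>
        ‖dist (prodN N 0 j p.1 • (p.2 • (h₁ • x))) y -
          dist (prodN N 0 j p.1 • (p.2 • (h₂ • x))) y‖ₑ := by
      intro y
      have : ∀ h : G, Measurable fun p : Ω × G =>
          dist (prodN N 0 j p.1 • (p.2 • (h • x))) y := fun h =>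
        ((hpm.comp measurable_fst).smul ((hsm _).comp measurable_snd)).dist measurable_const
      exact ((this h₁).sub (this h₂)).enorm
    rw [← lintegral_finsetSum _ fun y _ => (hm y).lintegral_prod_right']
    calc ENNReal.ofReal (ε / 2) = ∫⁻ _ω, ∫⁻ _σ, ENNReal.ofReal (ε / 2) ∂(ν (j + 1)) ∂P := by simp
      _ ≤ _ := by
        refine lintegral_mono fun ω => ?_
        refine le_trans ?_ (lintegral_finsetSum _ fun y _ =>
          (hm y).comp measurable_prodMk_left).le
        refine lintegral_mono fun σ => ?_
        have h0 := hsep (prodN N 0 j ω * σ)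
        rw [← smul_eq_mul, smul_assoc, smul_assoc] at h0
        simp only [Function.comp]
        generalize prodN N 0 j ω • (σ • (h₁ • x)) = p at *
        generalize prodN N 0 j ω • (σ • (h₂ • x)) = q at *
        have hp := ht (Set.mem_univ p)
        simp only [Set.mem_iUnion, Metric.mem_ball] at hp
        obtain ⟨y, hyt, hy⟩ := hp
        refine le_trans ?_ (Finset.single_le_sum (f := fun y => ‖dist p y - dist q y‖ₑ)
          (fun _ _ => zero_le) (htfin.mem_toFinset.2 hyt))
        rw [← ofReal_norm]
        apply ENNReal.ofReal_le_ofReal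
        rw [Real.norm_eq_abs, abs_sub_comm]
        refine le_trans ?_ (le_abs_self _)
        have := dist_triangle_right p q y
        linarith
  have := ge_of_tendsto' hsum hlow
  simp at this
  linarith

end Tsirelson
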